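/- In the category of nilpotent representations of the quiver with potential (Q, W): there is a non-split short exact sequence 0 → M(a₁b₂) → M(a₂b₁c₂a₁b₂) → M(a₂b₁) → 0, and a non-split short exact sequence 0 → M(a₂b₁) → M(a₁b₂c₁a₂b₁) → M(a₁b₂) → 0. Moreover the Yoneda extension groups Ext¹(M(a₂b₁), M(a₁b₂)) and Ext¹(M(a₁b₂), M(a₂b₁)) are each one-dimensional over ℂ; consequently every non-split extension in either direction has middle term isomorphic to the displayed string module. -/

import Mathlib

/-!
# Statement 4

Work over `ℂ`.  Let `Q` be the quiver with vertices `A, B, C` and arrows `a₁, a₂ : A → B`,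
`b₁, b₂ : B → C`, `c₁, c₂ : C → A`, with potential `W = a₁b₁c₁ + a₂b₂c₂`.  In the category
of nilpotent representations of `(Q, W)`: there is a non-split short exact sequence
`0 → M(a₁b₂) → M(a₂b₁c₂a₁b₂) → M(a₂b₁) → 0`, and a non-split short exact sequence
`0 → M(a₂b₁) → M(a₁b₂c₁a₂b₁) → M(a₁b₂) → 0`.  Moreover the Yoneda extension groups
`Ext¹(M(a₂b₁), M(a₁b₂))` and `Ext¹(M(a₁b₂), M(a₂b₁))` are each one-dimensional over `ℂ`;
consequently every non-split extension in either direction has middle term isomorphic to the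
displayed string module.

One-dimensionality of the Yoneda `Ext¹` is expressed without constructing the Baer-sum
structure: a class is nonzero iff its short exact sequences are non-split, and for `λ ≠ 0`
the class `λ·[ξ₁]` is represented by `(E₁, i₁ ∘ (λ⁻¹ • id), p₁)`; hence `[ξ₂] = λ·[ξ₁]` iff
there is an isomorphism `e : E₁ ≅ E₂` of representations with `e ∘ i₁ = i₂ ∘ (λ • id)` and
`p₂ ∘ e = p₁`.  A vector space is one-dimensional iff it has a nonzero vector and any two
nonzero vectors are proportional by a nonzero scalar.
-/

noncomputable section
open Module

/-- A representation of the quiver `Q` (vertices `A, B, C`; arrows `a₁, a₂ : A → B`,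
`b₁, b₂ : B → C`, `c₁, c₂ : C → A`) satisfying the Jacobian relations of the potential
`W = a₁b₁c₁ + a₂b₂c₂`. -/
structure Rep3 where
  VA : Type
  VB : Type
  VC : Type
  [acgA : AddCommGroup VA]
  [acgB : AddCommGroup VB]
  [acgC : AddCommGroup VC]
  [modA : Module ℂ VA]
  [modB : Module ℂ VB]
  [modC : Module ℂ VC]
  [fdA : FiniteDimensional ℂ VA]
  [fdB : FiniteDimensional ℂ VB]
  [fdC : FiniteDimensional ℂ VC]
  fa1 : VA →ₗ[ℂ] VB
  fa2 : VA →ₗ[ℂ] VB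
  fb1 : VB →ₗ[ℂ] VC
  fb2 : VB →ₗ[ℂ] VC
  fc1 : VC →ₗ[ℂ] VA
  fc2 : VC →ₗ[ℂ] VA
  rel_ba1 : fb1 ∘ₗ fa1 = 0
  rel_cb1 : fc1 ∘ₗ fb1 = 0
  rel_ac1 : fa1 ∘ₗ fc1 = 0
  rel_ba2 : fb2 ∘ₗ fa2 = 0
  rel_cb2 : fc2 ∘ₗ fb2 = 0
  rel_ac2 : fa2 ∘ₗ fc2 = 0

attribute [instance] Rep3.acgA Rep3.acgB Rep3.acgC Rep3.modA Rep3.modB Rep3.modC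
  Rep3.fdA Rep3.fdB Rep3.fdC

/-- The six arrows of the quiver. -/
inductive Arrow3 | a1 | a2 | b1 | b2 | c1 | c2
deriving DecidableEq

namespace Rep3

/-- The dimension vector `(dim V_A, dim V_B, dim V_C)`. -/
def dimVec (M : Rep3) : ℕ × ℕ × ℕ := (finrank ℂ M.VA, finrank ℂ M.VB, finrank ℂ M.VC)

/-- The total space `V_A × V_B × V_C` of a representation. -/
abbrev Tot (M : Rep3) : Type := M.VA × M.VB × M.VC

/-- The endomorphism of the total space `V_A × V_B × V_C` induced by one of the six
structure maps (extended by zero on the other components). -/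
def toEnd (M : Rep3) : Arrow3 → (M.Tot →ₗ[ℂ] M.Tot)
  | .a1 => LinearMap.prod 0 (LinearMap.prod (M.fa1 ∘ₗ LinearMap.fst ℂ M.VA (M.VB × M.VC)) 0)
  | .a2 => LinearMap.prod 0 (LinearMap.prod (M.fa2 ∘ₗ LinearMap.fst ℂ M.VA (M.VB × M.VC)) 0)
  | .b1 => LinearMap.prod 0 (LinearMap.prod 0
      (M.fb1 ∘ₗ LinearMap.fst ℂ M.VB M.VC ∘ₗ LinearMap.snd ℂ M.VA (M.VB × M.VC)))
  | .b2 => LinearMap.prod 0 (LinearMap.prod 0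
      (M.fb2 ∘ₗ LinearMap.fst ℂ M.VB M.VC ∘ₗ LinearMap.snd ℂ M.VA (M.VB × M.VC)))
  | .c1 => LinearMap.prod
      (M.fc1 ∘ₗ LinearMap.snd ℂ M.VB M.VC ∘ₗ LinearMap.snd ℂ M.VA (M.VB × M.VC)) 0
  | .c2 => LinearMap.prod
      (M.fc2 ∘ₗ LinearMap.snd ℂ M.VB M.VC ∘ₗ LinearMap.snd ℂ M.VA (M.VB × M.VC)) 0

/-- A representation is nilpotent if there is `N` such that every composite of `N` of the
six structure maps is zero.  (Composites are taken inside the endomorphisms of the total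
space `V_A × V_B × V_C`; non-composable composites vanish automatically there, so this is
equivalent to the vanishing of all composable composites of length `N`.) -/
def IsNilpotentRep (M : Rep3) : Prop :=
  ∃ N : ℕ, ∀ l : List Arrow3, l.length = N → (l.map M.toEnd).prod = 0

end Rep3

/-- Isomorphism of representations. -/
def RepIso3 (M N : Rep3) : Prop :=
  ∃ (eA : M.VA ≃ₗ[ℂ] N.VA) (eB : M.VB ≃ₗ[ℂ] N.VB) (eC : M.VC ≃ₗ[ℂ] N.VC),
    (∀ x, eB (M.fa1 x) = N.fa1 (eA x)) ∧ (∀ x, eB (M.fa2 x) = N.fa2 (eA x)) ∧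
    (∀ y, eC (M.fb1 y) = N.fb1 (eB y)) ∧ (∀ y, eC (M.fb2 y) = N.fb2 (eB y)) ∧
    (∀ z, eA (M.fc1 z) = N.fc1 (eC z)) ∧ (∀ z, eA (M.fc2 z) = N.fc2 (eC z))


/-- A morphism of representations: a triple of linear maps commuting with the six structure
maps. -/
structure Hom3 (M N : Rep3) where
  gA : M.VA →ₗ[ℂ] N.VA
  gB : M.VB →ₗ[ℂ] N.VB
  gC : M.VC →ₗ[ℂ] N.VC
  comm_a1 : ∀ x, gB (M.fa1 x) = N.fa1 (gA x)
  comm_a2 : ∀ x, gB (M.fa2 x) = N.fa2 (gA x)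
  comm_b1 : ∀ y, gC (M.fb1 y) = N.fb1 (gB y)
  comm_b2 : ∀ y, gC (M.fb2 y) = N.fb2 (gB y)
  comm_c1 : ∀ z, gA (M.fc1 z) = N.fc1 (gC z)
  comm_c2 : ∀ z, gA (M.fc2 z) = N.fc2 (gC z)

/-- A (componentwise) short exact sequence `0 → Y → E → X → 0` in the category of
*nilpotent* representations. -/
structure SES3 (Y X : Rep3) where
  E : Rep3
  nilE : Rep3.IsNilpotentRep E
  i : Hom3 Y E
  p : Hom3 E X
  injA : Function.Injective i.gA
  injB : Function.Injective i.gB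
  injC : Function.Injective i.gC
  surjA : Function.Surjective p.gA
  surjB : Function.Surjective p.gB
  surjC : Function.Surjective p.gC
  exactA : LinearMap.range i.gA = LinearMap.ker p.gA
  exactB : LinearMap.range i.gB = LinearMap.ker p.gB
  exactC : LinearMap.range i.gC = LinearMap.ker p.gC

/-- A short exact sequence `0 → Y → E → X → 0` splits if the projection admits a section
which is a morphism of representations. -/
def SES3.IsSplit {Y X : Rep3} (ξ : SES3 Y X) : Prop :=
  ∃ s : Hom3 X ξ.E,
    (∀ x, ξ.p.gA (s.gA x) = x) ∧ (∀ x, ξ.p.gB (s.gB x) = x) ∧ (∀ x, ξ.p.gC (s.gC x) = x)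

/-- `ScaledEquiv3 lam ξ₁ ξ₂` says that the Yoneda class of `ξ₂` equals `lam` times the
Yoneda class of `ξ₁`: there is an isomorphism of representations `e : E₁ ≅ E₂` such that
`e(i₁ y) = i₂ (lam • y)` and `p₂ ∘ e = p₁`. -/
def ScaledEquiv3 {Y X : Rep3} (lam : ℂ) (ξ₁ ξ₂ : SES3 Y X) : Prop :=
  ∃ (eA : ξ₁.E.VA ≃ₗ[ℂ] ξ₂.E.VA) (eB : ξ₁.E.VB ≃ₗ[ℂ] ξ₂.E.VB) (eC : ξ₁.E.VC ≃ₗ[ℂ] ξ₂.E.VC),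
    (∀ x, eB (ξ₁.E.fa1 x) = ξ₂.E.fa1 (eA x)) ∧ (∀ x, eB (ξ₁.E.fa2 x) = ξ₂.E.fa2 (eA x)) ∧
    (∀ y, eC (ξ₁.E.fb1 y) = ξ₂.E.fb1 (eB y)) ∧ (∀ y, eC (ξ₁.E.fb2 y) = ξ₂.E.fb2 (eB y)) ∧
    (∀ z, eA (ξ₁.E.fc1 z) = ξ₂.E.fc1 (eC z)) ∧ (∀ z, eA (ξ₁.E.fc2 z) = ξ₂.E.fc2 (eC z)) ∧
    (∀ y, eA (ξ₁.i.gA y) = ξ₂.i.gA (lam • y)) ∧ (∀ y, eB (ξ₁.i.gB y) = ξ₂.i.gB (lam • y)) ∧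
    (∀ y, eC (ξ₁.i.gC y) = ξ₂.i.gC (lam • y)) ∧
    (∀ v, ξ₂.p.gA (eA v) = ξ₁.p.gA v) ∧ (∀ v, ξ₂.p.gB (eB v) = ξ₁.p.gB v) ∧
    (∀ v, ξ₂.p.gC (eC v) = ξ₁.p.gC v)

/-- The Yoneda extension group `Ext¹(X, Y)` in the category of nilpotent representations
(equivalence classes of short exact sequences `0 → Y → E → X → 0` with the Baer-sum
`ℂ`-vector space structure) is one-dimensional over `ℂ`: there is a nonzero class (a
non-split sequence), and any two nonzero classes are proportional by a nonzero scalar. -/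
def ExtOneDimensional3 (X Y : Rep3) : Prop :=
  (∃ ξ : SES3 Y X, ¬ ξ.IsSplit) ∧
    ∀ ξ₁ ξ₂ : SES3 Y X, ¬ ξ₁.IsSplit → ¬ ξ₂.IsSplit →
      ∃ lam : ℂ, lam ≠ 0 ∧ ScaledEquiv3 lam ξ₁ ξ₂


/-- The elementary map `(Fin 2 → ℂ) → (Fin 2 → ℂ)` sending the basis vector indexed `s` to
the one indexed `t` and killing the other basis vector. -/
def mapE (s t : Fin 2) : (Fin 2 → ℂ) →ₗ[ℂ] (Fin 2 → ℂ) where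
  toFun v j := if j = t then v s else 0
  map_add' u v := by
    funext j
    by_cases h : j = t <;> simp [h]
  map_smul' c v := by
    funext j
    by_cases h : j = t <;> simp [h]

lemma mapE_comp (s t s' t' : Fin 2) (h : s' ≠ t) : mapE s' t' ∘ₗ mapE s t = 0 := by
  apply LinearMap.ext
  intro v
  funext j
  simp [mapE, h]

/-- The string module `M(a₂b₁c₂a₁b₂)` for the path `a₂b₁c₂a₁b₂` (basis
`z₀ →a₂ z₁ →b₁ z₂ →c₂ z₃ →a₁ z₄ →b₂ z₅` with `z₀, z₃` in `V_A` (indices `0, 1`),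
`z₁, z₄` in `V_B` (indices `0, 1`), `z₂, z₅` in `V_C` (indices `0, 1`); each structure map
sends the indicated basis vector to the next one and kills all other basis vectors). -/
def Ma2b1c2a1b2 : Rep3 where
  VA := Fin 2 → ℂ
  VB := Fin 2 → ℂ
  VC := Fin 2 → ℂ
  fa1 := mapE 1 1
  fa2 := mapE 0 0
  fb1 := mapE 0 0
  fb2 := mapE 1 1
  fc1 := 0
  fc2 := mapE 0 1
  rel_ba1 := mapE_comp 1 1 0 0 (by decide)
  rel_cb1 := by simp
  rel_ac1 := by simp
  rel_ba2 := mapE_comp 0 0 1 1 (by decide)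
  rel_cb2 := mapE_comp 1 1 0 1 (by decide)
  rel_ac2 := mapE_comp 0 1 0 0 (by decide)

/-- The string module `M(a₁b₂c₁a₂b₁)` for the path `a₁b₂c₁a₂b₁` (basis
`z₀ →a₁ z₁ →b₂ z₂ →c₁ z₃ →a₂ z₄ →b₁ z₅` with `z₀, z₃` in `V_A`, `z₁, z₄` in `V_B`,
`z₂, z₅` in `V_C`). -/
def Ma1b2c1a2b1 : Rep3 where
  VA := Fin 2 → ℂ
  VB := Fin 2 → ℂ
  VC := Fin 2 → ℂ
  fa1 := mapE 0 0
  fa2 := mapE 1 1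
  fb1 := mapE 1 1
  fb2 := mapE 0 0
  fc1 := mapE 0 1
  fc2 := 0
  rel_ba1 := mapE_comp 0 0 1 1 (by decide)
  rel_cb1 := mapE_comp 1 1 0 1 (by decide)
  rel_ac1 := mapE_comp 0 1 0 0 (by decide)
  rel_ba2 := mapE_comp 1 1 0 0 (by decide)
  rel_cb2 := by simp
  rel_ac2 := by simp

/-- The string module `M(a₁b₂)`: `V_A = V_B = V_C = ℂ`, `f_{a₁} = f_{b₂} = id`, all other
maps zero. -/
def Ma1b2 : Rep3 where
  VA := ℂ
  VB := ℂ
  VC := ℂ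
  fa1 := LinearMap.id
  fa2 := 0
  fb1 := 0
  fb2 := LinearMap.id
  fc1 := 0
  fc2 := 0
  rel_ba1 := by simp
  rel_cb1 := by simp
  rel_ac1 := by simp
  rel_ba2 := by simp
  rel_cb2 := by simp
  rel_ac2 := by simp

/-- The string module `M(a₂b₁)`: `V_A = V_B = V_C = ℂ`, `f_{a₂} = f_{b₁} = id`, all other
maps zero. -/
def Ma2b1 : Rep3 where
  VA := ℂ
  VB := ℂ
  VC := ℂ
  fa1 := 0
  fa2 := LinearMap.id
  fb1 := LinearMap.id
  fb2 := 0
  fc1 := 0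
  fc2 := 0
  rel_ba1 := by simp
  rel_cb1 := by simp
  rel_ac1 := by simp
  rel_ba2 := by simp
  rel_cb2 := by simp
  rel_ac2 := by simp

namespace ExtProof

/-- Unbundled data of an extension of `M(a₂b₁)` by `M(a₁b₂)`. -/
structure Dat (E : Rep3) where
  iA : ℂ →ₗ[ℂ] E.VA
  iB : ℂ →ₗ[ℂ] E.VB
  iC : ℂ →ₗ[ℂ] E.VC
  pA : E.VA →ₗ[ℂ] ℂ
  pB : E.VB →ₗ[ℂ] ℂ
  pC : E.VC →ₗ[ℂ] ℂ
  ia1 : ∀ t, E.fa1 (iA t) = iB t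
  ia2 : ∀ t, E.fa2 (iA t) = 0
  ib1 : ∀ t, E.fb1 (iB t) = 0
  ib2 : ∀ t, E.fb2 (iB t) = iC t
  ic1 : ∀ t, E.fc1 (iC t) = 0
  ic2 : ∀ t, E.fc2 (iC t) = 0
  pa1 : ∀ v, pB (E.fa1 v) = 0
  pa2 : ∀ v, pB (E.fa2 v) = pA v
  pb1 : ∀ v, pC (E.fb1 v) = pB v
  pb2 : ∀ v, pC (E.fb2 v) = 0
  pc1 : ∀ v, pA (E.fc1 v) = 0
  pc2 : ∀ v, pA (E.fc2 v) = 0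
  injA : Function.Injective iA
  injB : Function.Injective iB
  injC : Function.Injective iC
  surA : Function.Surjective pA
  exA : ∀ v, pA v = 0 ↔ ∃ t, iA t = v
  exB : ∀ v, pB v = 0 ↔ ∃ t, iB t = v
  exC : ∀ v, pC v = 0 ↔ ∃ t, iC t = v

/-- The unbundled data of a short exact sequence. -/
def toDat (ξ : SES3 Ma1b2 Ma2b1) : Dat ξ.E where
  iA := ξ.i.gA
  iB := ξ.i.gB
  iC := ξ.i.gC
  pA := ξ.p.gA
  pB := ξ.p.gB
  pC := ξ.p.gC
  ia1 t := (ξ.i.comm_a1 t).symm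
  ia2 t := (ξ.i.comm_a2 t).symm.trans (map_zero ξ.i.gB)
  ib1 t := (ξ.i.comm_b1 t).symm.trans (map_zero ξ.i.gC)
  ib2 t := (ξ.i.comm_b2 t).symm
  ic1 t := (ξ.i.comm_c1 t).symm.trans (map_zero ξ.i.gA)
  ic2 t := (ξ.i.comm_c2 t).symm.trans (map_zero ξ.i.gA)
  pa1 := ξ.p.comm_a1
  pa2 := ξ.p.comm_a2
  pb1 := ξ.p.comm_b1
  pb2 := ξ.p.comm_b2
  pc1 := ξ.p.comm_c1
  pc2 := ξ.p.comm_c2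
  injA := ξ.injA
  injB := ξ.injB
  injC := ξ.injC
  surA := ξ.surjA
  exA v := by
    have h := congrArg (fun S => v ∈ S) ξ.exactA
    exact (iff_of_eq h).symm
  exB v := by
    have h := congrArg (fun S => v ∈ S) ξ.exactB
    exact (iff_of_eq h).symm
  exC v := by
    have h := congrArg (fun S => v ∈ S) ξ.exactC
    exact (iff_of_eq h).symm

/-- Normal form of an extension. -/
structure NF {E : Rep3} (D : Dat E) (xA : E.VA) (xB : E.VB) (xC : E.VC) (δ : ℂ) : Prop where
  pA : D.pA xA = 1
  pB : D.pB xB = 1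
  pC : D.pC xC = 1
  a1 : E.fa1 xA = 0
  a2 : E.fa2 xA = xB
  b1 : E.fb1 xB = xC
  b2 : E.fb2 xB = 0
  c1 : E.fc1 xC = 0
  c2 : E.fc2 xC = D.iA δ

lemma exists_nf {E : Rep3} (D : Dat E) : ∃ xA xB xC δ, NF D xA xB xC δ := by
  obtain ⟨u, hu⟩ := D.surA 1
  obtain ⟨α, hα⟩ := (D.exB _).1 (D.pa1 u)
  have hpi : ∀ t, D.pA (D.iA t) = 0 := fun t => (D.exA _).2 ⟨t, rfl⟩
  have hx : D.pA (u - D.iA α) = 1 := by rw [map_sub, hpi, hu, sub_zero]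
  obtain ⟨δ, hδ⟩ := (D.exA _).1 (D.pc2 (E.fb1 (E.fa2 (u - D.iA α))))
  refine ⟨u - D.iA α, _, _, δ, hx, ?_, ?_, ?_, rfl, rfl, ?_, ?_, hδ.symm⟩
  · rw [D.pa2, hx]
  · rw [D.pb1, D.pa2, hx]
  · rw [map_sub, D.ia1, hα, sub_self]
  · exact LinearMap.congr_fun E.rel_ba2 _
  · exact LinearMap.congr_fun E.rel_cb1 _

lemma dec {V : Type} [AddCommGroup V] [Module ℂ V] {i : ℂ →ₗ[ℂ] V} {p : V →ₗ[ℂ] ℂ} {x : V}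
    (ex : ∀ v, p v = 0 ↔ ∃ t, i t = v) (hx : p x = 1) (v : V) :
    ∃ s t : ℂ, v = s • x + i t := by
  obtain ⟨t, ht⟩ := (ex (v - p v • x)).1 (by simp [hx])
  exact ⟨p v, t, by rw [ht]; abel⟩

lemma mkE {V W : Type} [AddCommGroup V] [Module ℂ V] [AddCommGroup W] [Module ℂ W]
    {i : ℂ →ₗ[ℂ] V} {p : V →ₗ[ℂ] ℂ} {x : V}
    {i' : ℂ →ₗ[ℂ] W} {p' : W →ₗ[ℂ] ℂ} {x' : W}
    (inj : Function.Injective i) (ex : ∀ v, p v = 0 ↔ ∃ t, i t = v) (hx : p x = 1)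
    (inj' : Function.Injective i') (ex' : ∀ v, p' v = 0 ↔ ∃ t, i' t = v) (hx' : p' x' = 1)
    {l : ℂ} (hl : l ≠ 0) :
    ∃ e : V ≃ₗ[ℂ] W, e x = x' ∧ (∀ t, e (i t) = i' (l * t)) ∧ ∀ v, p' (e v) = p v := by
  have hpi : ∀ t, p (i t) = 0 := fun t => (ex _).2 ⟨t, rfl⟩
  have hpi' : ∀ t, p' (i' t) = 0 := fun t => (ex' _).2 ⟨t, rfl⟩
  let f : (ℂ × ℂ) →ₗ[ℂ] V := (LinearMap.toSpanSingleton ℂ V x).coprod i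
  let g : (ℂ × ℂ) →ₗ[ℂ] W := (LinearMap.toSpanSingleton ℂ W x').coprod (l • i')
  have hf : ∀ s t, f (s, t) = s • x + i t := fun s t => by simp [f]
  have hg : ∀ s t, g (s, t) = s • x' + l • i' t := fun s t => by simp [g]
  have fb : Function.Bijective f := by
    constructor
    · rw [← LinearMap.ker_eq_bot, LinearMap.ker_eq_bot']
      rintro ⟨s, t⟩ h
      rw [hf] at h
      have hs : s = 0 := by simpa [hx, hpi] using congrArg p h
      subst hs
      have ht : t = 0 := inj (by simpa using h)
      rw [ht]; rfl
    · intro v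
      obtain ⟨s, t, h⟩ := dec ex hx v
      exact ⟨(s, t), by rw [hf, h]⟩
  have gb : Function.Bijective g := by
    constructor
    · rw [← LinearMap.ker_eq_bot, LinearMap.ker_eq_bot']
      rintro ⟨s, t⟩ h
      rw [hg] at h
      have hs : s = 0 := by simpa [hx', hpi'] using congrArg p' h
      subst hs
      have ht : t = 0 := inj' (by simpa [hl] using h)
      rw [ht]; rfl
    · intro v
      obtain ⟨s, t, h⟩ := dec ex' hx' v
      refine ⟨(s, l⁻¹ * t), ?_⟩
      rw [hg, h, ← map_smul, smul_eq_mul, mul_inv_cancel_left₀ hl]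
  let ef := LinearEquiv.ofBijective f fb
  let eg := LinearEquiv.ofBijective g gb
  have key : ∀ z, (ef.symm.trans eg) (f z) = g z := fun z => by
    have : ef.symm (f z) = z := ef.symm_apply_apply z
    rw [LinearEquiv.trans_apply, this]; rfl
  refine ⟨ef.symm.trans eg, ?_, ?_, ?_⟩
  · have := key (1, 0)
    rw [hf, hg] at this
    simpa using this
  · intro t
    have := key (0, t)
    rw [hf, hg] at this
    rw [← smul_eq_mul, map_smul]
    simpa using this
  · intro v
    obtain ⟨⟨s, t⟩, rfl⟩ := fb.2 v
    rw [key, hf, hg]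
    simp [hx, hx', hpi, hpi']

lemma split_of_nf (ξ : SES3 Ma1b2 Ma2b1) {xA xB xC} (h : NF (toDat ξ) xA xB xC 0) :
    ξ.IsSplit := by
  have sec : ∀ {V : Type} [AddCommGroup V] [Module ℂ V] (p : V →ₗ[ℂ] ℂ) (x : V), p x = 1 →
      ∀ t : ℂ, p (LinearMap.toSpanSingleton ℂ V x t) = t := by
    intro V _ _ p x hx t
    simp [hx]
  have com : ∀ {V W : Type} [AddCommGroup V] [Module ℂ V] [AddCommGroup W] [Module ℂ W]
      (f : V →ₗ[ℂ] W) (x : V) (y : W), f x = y → ∀ t : ℂ,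
      LinearMap.toSpanSingleton ℂ W y t = f (LinearMap.toSpanSingleton ℂ V x t) := by
    intro V W _ _ _ _ f x y hx t
    simp [hx]
  have com0 : ∀ {V W : Type} [AddCommGroup V] [Module ℂ V] [AddCommGroup W] [Module ℂ W]
      (f : V →ₗ[ℂ] W) (x : V) (y : W), f x = 0 → ∀ t : ℂ,
      LinearMap.toSpanSingleton ℂ W y 0 = f (LinearMap.toSpanSingleton ℂ V x t) := by
    intro V W _ _ _ _ f x y hx t
    simp [hx]
  have hc2 : ξ.E.fc2 xC = 0 := h.c2.trans (map_zero _)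
  refine ⟨{ gA := LinearMap.toSpanSingleton ℂ ξ.E.VA xA
            gB := LinearMap.toSpanSingleton ℂ ξ.E.VB xB
            gC := LinearMap.toSpanSingleton ℂ ξ.E.VC xC
            comm_a1 := com0 _ _ _ h.a1
            comm_a2 := com _ _ _ h.a2
            comm_b1 := com _ _ _ h.b1
            comm_b2 := com0 _ _ _ h.b2
            comm_c1 := com0 _ _ _ h.c1
            comm_c2 := com0 _ _ _ hc2 }, ?_, ?_, ?_⟩
  · exact sec (toDat ξ).pA xA h.pA
  · exact sec (toDat ξ).pB xB h.pB
  · exact sec (toDat ξ).pC xC h.pC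

lemma scaled (ξ₁ ξ₂ : SES3 Ma1b2 Ma2b1) (h₁ : ¬ ξ₁.IsSplit) (h₂ : ¬ ξ₂.IsSplit) :
    ∃ lam : ℂ, lam ≠ 0 ∧ ScaledEquiv3 lam ξ₁ ξ₂ := by
  obtain ⟨xA, xB, xC, d, n⟩ := exists_nf (toDat ξ₁)
  obtain ⟨yA, yB, yC, d', n'⟩ := exists_nf (toDat ξ₂)
  have hd : d ≠ 0 := by rintro rfl; exact h₁ (split_of_nf _ n)
  have hd' : d' ≠ 0 := by rintro rfl; exact h₂ (split_of_nf _ n')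
  have hl : d' / d ≠ 0 := div_ne_zero hd' hd
  refine ⟨d' / d, hl, ?_⟩
  have hld : d' / d * d = d' := div_mul_cancel₀ _ hd
  generalize d' / d = l at hl hld
  obtain ⟨eA, eAx, eAi, eAp⟩ :=
    mkE (toDat ξ₁).injA (toDat ξ₁).exA n.pA (toDat ξ₂).injA (toDat ξ₂).exA n'.pA hl
  obtain ⟨eB, eBx, eBi, eBp⟩ :=
    mkE (toDat ξ₁).injB (toDat ξ₁).exB n.pB (toDat ξ₂).injB (toDat ξ₂).exB n'.pB hl
  obtain ⟨eC, eCx, eCi, eCp⟩ :=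
    mkE (toDat ξ₁).injC (toDat ξ₁).exC n.pC (toDat ξ₂).injC (toDat ξ₂).exC n'.pC hl
  have D₁ := (toDat ξ₁).ia1
  refine ⟨eA, eB, eC, ?_, ?_, ?_, ?_, ?_, ?_, eAi, eBi, eCi, eAp, eBp, eCp⟩
  · intro v
    obtain ⟨s, t, rfl⟩ := dec (toDat ξ₁).exA n.pA v
    simp only [map_add, map_smul, n.a1, (toDat ξ₁).ia1, eAx, eAi, eBi, n'.a1, (toDat ξ₂).ia1,
      map_zero]
  · intro v
    obtain ⟨s, t, rfl⟩ := dec (toDat ξ₁).exA n.pA v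
    simp only [map_add, map_smul, n.a2, (toDat ξ₁).ia2, eAx, eAi, eBi, n'.a2, (toDat ξ₂).ia2,
      map_zero, eBx]
  · intro v
    obtain ⟨s, t, rfl⟩ := dec (toDat ξ₁).exB n.pB v
    simp only [map_add, map_smul, n.b1, (toDat ξ₁).ib1, eBx, eBi, eCi, n'.b1, (toDat ξ₂).ib1,
      map_zero, eCx]
  · intro v
    obtain ⟨s, t, rfl⟩ := dec (toDat ξ₁).exB n.pB v
    simp only [map_add, map_smul, n.b2, (toDat ξ₁).ib2, eBx, eBi, eCi, n'.b2, (toDat ξ₂).ib2,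
      map_zero, eCx]
  · intro v
    obtain ⟨s, t, rfl⟩ := dec (toDat ξ₁).exC n.pC v
    simp only [map_add, map_smul, n.c1, (toDat ξ₁).ic1, eCx, eCi, eAi, n'.c1, (toDat ξ₂).ic1,
      map_zero]
  · intro v
    obtain ⟨s, t, rfl⟩ := dec (toDat ξ₁).exC n.pC v
    simp only [map_add, map_smul, n.c2, (toDat ξ₁).ic2, eCx, eCi, eAi, n'.c2, (toDat ξ₂).ic2,
      map_zero, hld]

lemma iso_of_scaled {Y X : Rep3} {l : ℂ} {ξ₁ ξ₂ : SES3 Y X} (h : ScaledEquiv3 l ξ₁ ξ₂) :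
    RepIso3 ξ₁.E ξ₂.E := by
  obtain ⟨eA, eB, eC, h1, h2, h3, h4, h5, h6, -⟩ := h
  exact ⟨eA, eB, eC, h1, h2, h3, h4, h5, h6⟩

lemma iso_refl (M : Rep3) : RepIso3 M M :=
  ⟨LinearEquiv.refl ℂ _, LinearEquiv.refl ℂ _, LinearEquiv.refl ℂ _, fun _ => rfl, fun _ => rfl,
    fun _ => rfl, fun _ => rfl, fun _ => rfl, fun _ => rfl⟩

/-- The total space of the long string module. -/
abbrev T : Type := (Fin 2 → ℂ) × (Fin 2 → ℂ) × (Fin 2 → ℂ)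

/-- The six arrows acting on the total space of the long string module. -/
def act : Arrow3 → T → T
  | .a1, w => (0, mapE 1 1 w.1, 0)
  | .a2, w => (0, mapE 0 0 w.1, 0)
  | .b1, w => (0, 0, mapE 0 0 w.2.1)
  | .b2, w => (0, 0, mapE 1 1 w.2.1)
  | .c1, _ => (0, 0, 0)
  | .c2, w => (mapE 0 1 w.2.2, 0, 0)

lemma toEnd_eq (a : Arrow3) (w : T) : (Ma2b1c2a1b2.toEnd a : T → T) w = act a w := by
  cases a <;> rfl

/-- The filtration condition. -/
def Lev (n : ℕ) (w : T) : Prop :=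
  (1 ≤ n → w.1 0 = 0) ∧ (2 ≤ n → w.2.1 0 = 0) ∧ (3 ≤ n → w.2.2 0 = 0) ∧
  (4 ≤ n → w.1 1 = 0) ∧ (5 ≤ n → w.2.1 1 = 0) ∧ (6 ≤ n → w.2.2 1 = 0)

lemma lev_act (a : Arrow3) (n : ℕ) (w : T) (h : Lev n w) : Lev (n + 1) (act a w) := by
  obtain ⟨h1, h2, h3, h4, h5, h6⟩ := h
  cases a <;> refine ⟨?_, ?_, ?_, ?_, ?_, ?_⟩ <;> intro hn <;> simp [act, mapE] <;>
    first
    | exact h1 (by omega)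
    | exact h2 (by omega)
    | exact h3 (by omega)
    | exact h4 (by omega)
    | exact h5 (by omega)

lemma lev_prod (l : List Arrow3) (w : T) :
    Lev l.length (((l.map Ma2b1c2a1b2.toEnd).prod : T → T) w) := by
  induction l with
  | nil => refine ⟨?_, ?_, ?_, ?_, ?_, ?_⟩ <;> intro hn <;> simp at hn
  | cons a l ih =>
    have := lev_act a _ _ ih
    have e := toEnd_eq a (((l.map Ma2b1c2a1b2.toEnd).prod : T → T) w)
    rw [List.map_cons, List.prod_cons]
    exact (congrArg (Lev (l.length + 1)) e).mpr this

lemma nilp : Ma2b1c2a1b2.IsNilpotentRep := by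
  refine ⟨6, fun l hl => LinearMap.ext fun w => ?_⟩
  have h := lev_prod l w
  rw [hl] at h
  obtain ⟨h1, h2, h3, h4, h5, h6⟩ := h
  refine Prod.ext ?_ (Prod.ext ?_ ?_)
  · funext j
    fin_cases j
    · exact h1 (by norm_num)
    · exact h4 (by norm_num)
  · funext j
    fin_cases j
    · exact h2 (by norm_num)
    · exact h5 (by norm_num)
  · funext j
    fin_cases j
    · exact h3 (by norm_num)
    · exact h6 (by norm_num)

/-- Inclusion of the last coordinate. -/
def inc : ℂ →ₗ[ℂ] (Fin 2 → ℂ) := LinearMap.single ℂ (fun _ => ℂ) 1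
/-- Projection to the first coordinate. -/
def prj : (Fin 2 → ℂ) →ₗ[ℂ] ℂ := LinearMap.proj 0

lemma inc_inj : Function.Injective inc := fun x y h => by
  simpa [inc] using congrFun h 1
lemma prj_surj : Function.Surjective prj := fun x => ⟨fun _ => x, rfl⟩
lemma inc_prj : LinearMap.range inc = LinearMap.ker prj := by
  ext v
  constructor
  · rintro ⟨t, rfl⟩
    simp [inc, prj]
  · intro h
    have h0 : v 0 = 0 := h
    refine ⟨v 1, ?_⟩
    funext j
    fin_cases j <;> simp [inc, h0]
lemma inc11 (t : ℂ) : inc t = mapE 1 1 (inc t) := by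
  funext j
  fin_cases j <;> simp [inc, mapE]
lemma inc0 (t : ℂ) (k : Fin 2) : inc 0 = mapE 0 k (inc t) := by
  funext j
  simp [inc, mapE]
lemma prj00 (v) : prj (mapE 0 0 v) = prj v := by
  simp [prj, mapE]
lemma prj1 (v) (k : Fin 2) : prj (mapE k 1 v) = 0 := by
  simp [prj, mapE]

/-- The displayed short exact sequence. -/
def ξ₀ : SES3 Ma1b2 Ma2b1 where
  E := Ma2b1c2a1b2
  nilE := nilp
  i :=
    { gA := inc, gB := inc, gC := inc
      comm_a1 := inc11
      comm_a2 := fun t => inc0 t 0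
      comm_b1 := fun t => inc0 t 0
      comm_b2 := inc11
      comm_c1 := fun _ => map_zero inc
      comm_c2 := fun t => inc0 t 1 }
  p :=
    { gA := prj, gB := prj, gC := prj
      comm_a1 := fun v => prj1 v 1
      comm_a2 := prj00
      comm_b1 := prj00
      comm_b2 := fun v => prj1 v 1
      comm_c1 := fun _ => map_zero prj
      comm_c2 := fun v => prj1 v 0 }
  injA := inc_inj
  injB := inc_inj
  injC := inc_inj
  surjA := prj_surj
  surjB := prj_surj
  surjC := prj_surj
  exactA := inc_prj
  exactB := inc_prj
  exactC := inc_prj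

lemma nonsplit₀ : ¬ ξ₀.IsSplit := by
  rintro ⟨s, -, -, hC⟩
  have h1 : (s.gC (1 : ℂ) : Fin 2 → ℂ) 0 = (1 : ℂ) := hC (1 : ℂ)
  have h2 : s.gA (0 : ℂ) = mapE 0 1 (s.gC (1 : ℂ)) := s.comm_c2 (1 : ℂ)
  have h3 : s.gA (0 : ℂ) = (0 : Fin 2 → ℂ) := map_zero s.gA
  have h4 : (mapE 0 1 (s.gC (1 : ℂ)) : Fin 2 → ℂ) 1 = 0 := congrFun (h2.symm.trans h3) 1
  have h5 : (s.gC (1 : ℂ) : Fin 2 → ℂ) 0 = (0 : ℂ) := h4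
  exact one_ne_zero (h1.symm.trans h5)

/-- Exchange the indices 1 and 2. -/
def sw (M : Rep3) : Rep3 where
  VA := M.VA
  VB := M.VB
  VC := M.VC
  fa1 := M.fa2
  fa2 := M.fa1
  fb1 := M.fb2
  fb2 := M.fb1
  fc1 := M.fc2
  fc2 := M.fc1
  rel_ba1 := M.rel_ba2
  rel_cb1 := M.rel_cb2
  rel_ac1 := M.rel_ac2
  rel_ba2 := M.rel_ba1
  rel_cb2 := M.rel_cb1
  rel_ac2 := M.rel_ac1

/-- Exchange the indices 1 and 2 of arrows. -/
def swArr : Arrow3 → Arrow3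
  | .a1 => .a2
  | .a2 => .a1
  | .b1 => .b2
  | .b2 => .b1
  | .c1 => .c2
  | .c2 => .c1

lemma sw_toEnd (M : Rep3) (a : Arrow3) : (sw M).toEnd a = M.toEnd (swArr a) := by
  cases a <;> rfl

lemma sw_nil {M : Rep3} (h : M.IsNilpotentRep) : (sw M).IsNilpotentRep := by
  obtain ⟨N, h⟩ := h
  refine ⟨N, fun l hl => ?_⟩
  have h' := h (l.map swArr) (by simpa using hl)
  have e : l.map (sw M).toEnd = (l.map swArr).map M.toEnd := by
    rw [List.map_map]
    exact List.map_congr_left fun a _ => sw_toEnd M a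
  rw [e]
  exact h'

/-- Exchange the indices 1 and 2 of a morphism. -/
def swHom {M N : Rep3} (f : Hom3 M N) : Hom3 (sw M) (sw N) where
  gA := f.gA
  gB := f.gB
  gC := f.gC
  comm_a1 := f.comm_a2
  comm_a2 := f.comm_a1
  comm_b1 := f.comm_b2
  comm_b2 := f.comm_b1
  comm_c1 := f.comm_c2
  comm_c2 := f.comm_c1

/-- Exchange the indices 1 and 2 of a short exact sequence. -/
def swSES {Y X : Rep3} (ξ : SES3 Y X) : SES3 (sw Y) (sw X) where
  E := sw ξ.E
  nilE := sw_nil ξ.nilE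
  i := swHom ξ.i
  p := swHom ξ.p
  injA := ξ.injA
  injB := ξ.injB
  injC := ξ.injC
  surjA := ξ.surjA
  surjB := ξ.surjB
  surjC := ξ.surjC
  exactA := ξ.exactA
  exactB := ξ.exactB
  exactC := ξ.exactC

lemma sw_split {Y X : Rep3} {ξ : SES3 Y X} (h : ξ.IsSplit) : (swSES ξ).IsSplit := by
  obtain ⟨s, h⟩ := h
  exact ⟨swHom s, h⟩

lemma sw_split' {Y X : Rep3} {ξ : SES3 Y X} (h : (swSES ξ).IsSplit) : ξ.IsSplit :=
  sw_split h

lemma sw_scaled {Y X : Rep3} {l : ℂ} {ξ₁ ξ₂ : SES3 Y X}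
    (h : ScaledEquiv3 l (swSES ξ₁) (swSES ξ₂)) : ScaledEquiv3 l ξ₁ ξ₂ := by
  obtain ⟨eA, eB, eC, h1, h2, h3, h4, h5, h6, h⟩ := h
  exact ⟨eA, eB, eC, h2, h1, h4, h3, h6, h5, h⟩

/-- The second displayed short exact sequence. -/
def ξ₁ : SES3 Ma2b1 Ma1b2 := swSES ξ₀

lemma nonsplit₁ : ¬ ξ₁.IsSplit := fun h => nonsplit₀ (sw_split' h)

lemma scaled' (ξ η : SES3 Ma2b1 Ma1b2) (h₁ : ¬ ξ.IsSplit) (h₂ : ¬ η.IsSplit) :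
    ∃ lam : ℂ, lam ≠ 0 ∧ ScaledEquiv3 lam ξ η := by
  obtain ⟨l, hl, h⟩ := scaled (swSES ξ) (swSES η) (fun h => h₁ (sw_split' h))
    (fun h => h₂ (sw_split' h))
  exact ⟨l, hl, sw_scaled h⟩

end ExtProof

/-- In the category of nilpotent representations of `(Q, W)`:
there is a non-split short exact sequence
`0 → M(a₁b₂) → M(a₂b₁c₂a₁b₂) → M(a₂b₁) → 0` and a non-split short exact sequence
`0 → M(a₂b₁) → M(a₁b₂c₁a₂b₁) → M(a₁b₂) → 0`; the Yoneda extension groups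
`Ext¹(M(a₂b₁), M(a₁b₂))` and `Ext¹(M(a₁b₂), M(a₂b₁))` are each one-dimensional over `ℂ`;
and consequently every non-split extension in either direction has middle term isomorphic
to the displayed string module. -/
theorem extensions_of_Ma1b2_Ma2b1 :
    (∃ ξ : SES3 Ma1b2 Ma2b1, ¬ ξ.IsSplit ∧ RepIso3 ξ.E Ma2b1c2a1b2) ∧
    (∃ ξ : SES3 Ma2b1 Ma1b2, ¬ ξ.IsSplit ∧ RepIso3 ξ.E Ma1b2c1a2b1) ∧
    ExtOneDimensional3 Ma2b1 Ma1b2 ∧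
    ExtOneDimensional3 Ma1b2 Ma2b1 ∧
    (∀ ξ : SES3 Ma1b2 Ma2b1, ¬ ξ.IsSplit → RepIso3 ξ.E Ma2b1c2a1b2) ∧
    (∀ ξ : SES3 Ma2b1 Ma1b2, ¬ ξ.IsSplit → RepIso3 ξ.E Ma1b2c1a2b1) := by
  refine ⟨⟨ExtProof.ξ₀, ExtProof.nonsplit₀, ExtProof.iso_refl _⟩,
    ⟨ExtProof.ξ₁, ExtProof.nonsplit₁, ExtProof.iso_refl _⟩,
    ⟨⟨ExtProof.ξ₀, ExtProof.nonsplit₀⟩, ExtProof.scaled⟩,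
    ⟨⟨ExtProof.ξ₁, ExtProof.nonsplit₁⟩, ExtProof.scaled'⟩, ?_, ?_⟩
  · intro ξ h
    obtain ⟨l, -, hs⟩ := ExtProof.scaled ξ ExtProof.ξ₀ h ExtProof.nonsplit₀
    exact ExtProof.iso_of_scaled hs
  · intro ξ h
    obtain ⟨l, -, hs⟩ := ExtProof.scaled' ξ ExtProof.ξ₁ h ExtProof.nonsplit₁
    exact ExtProof.iso_of_scaled hs
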